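/- Let b ≥ 2 and α ≥ 2 be integers. Then Σ_{k=1}^{∞} b^{−μ_α(k)} = Σ_{v=1}^{α−1} ∏_{i=1}^{v} (b−1)/(b^{i}−1) + ((b^{α}−1)/(b^{α}−b)) ∏_{i=1}^{α} (b−1)/(b^{i}−1). In particular, if z ∈ G has some digits ζ_1 = ⋯ = ζ_n and ζ_{n+1} = ζ_{n+2} = ⋯ = 0 with ζ_1 = ⋯ = ζ_n = 0, then χ_b(Φ_b(z)) = Σ_{k=1}^{∞} b^{−μ_α(k)} equals this value. -/

import Mathlib

namespace QMC

/-- the `i`-th `b`-adic digit of `k`. -/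
def digit (b k i : ℕ) : ℕ := k / b ^ i % b

/-- the `k`-th character `W_k` on `G = (ℤ/bℤ)^ℕ`, where `z i = ζ_{i+1}`. -/
noncomputable def W (b k : ℕ) (z : ℕ → ZMod b) : ℂ :=
  Complex.exp (2 * Real.pi * Complex.I / b) ^
    ∑ i ∈ Finset.range (k + 1), digit b k i * (z i).val

/-- `μ_α(k) = a₁ + ⋯ + a_{min(v,α)}`, the sum of the `α` largest positions (counted
from `1`) of nonzero `b`-adic digits of `k`; `μ_α(0) = 0`. -/
def mualpha (b α k : ℕ) : ℕ :=
  (((((Finset.range (k + 1)).filter fun i => digit b k i ≠ 0).sort (· ≤ ·)).reverse.take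
    α).map (· + 1)).sum

/-- `χ_b(z) = Σ_{k ≥ 1} b^{-μ_α(k)} W_k(z)`. -/
noncomputable def chi (b α : ℕ) (z : ℕ → ZMod b) : ℂ :=
  ∑' k : ℕ, ((b : ℂ) ^ mualpha b α (k + 1))⁻¹ * W b (k + 1) z

/-- the `b`-adic tent transformation `Φ_b : G → G`. -/
def tent (b : ℕ) (z : ℕ → ZMod b) : ℕ → ZMod b := fun i => z (i + 1) - z 0

theorem hasSum_cast {f g : ℕ → ℝ} {x y : ℝ} (h : HasSum f x) (hf : ∀ m, g m = f m) (hxy : y = x) :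
    HasSum g y := by
  rw [hxy, funext hf]; exact h

theorem digit_zero_of_lt {b r m i : ℕ} (hb : 2 ≤ b) (hr : r < b ^ m) (hi : m ≤ i) :
    digit b r i = 0 := by
  unfold digit
  have : r < b ^ i := lt_of_lt_of_le hr (Nat.pow_le_pow_right (by omega) hi)
  simp [Nat.div_eq_of_lt this]

theorem lt_of_digit_ne {b k i : ℕ} (hb : 2 ≤ b) (h : digit b k i ≠ 0) : i < k + 1 := by
  by_contra hc
  exact h (digit_zero_of_lt hb (Nat.lt_pow_self (by omega) : k < b ^ k) (by omega))

theorem filter_step {b d r m : ℕ} (hb : 2 ≤ b) (hd : 0 < d) (hdb : d < b) (hr : r < b ^ m) :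
    ((Finset.range (d * b ^ m + r + 1)).filter fun i => digit b (d * b ^ m + r) i ≠ 0) =
      insert m ((Finset.range (r + 1)).filter fun i => digit b r i ≠ 0) := by
  have hbm : 0 < b ^ m := Nat.pow_pos (by omega)
  have hm : digit b (d * b ^ m + r) m = d := by
    unfold digit
    rw [Nat.add_comm, Nat.add_mul_div_right _ _ hbm, Nat.div_eq_of_lt hr, Nat.zero_add,
      Nat.mod_eq_of_lt hdb]
  have hlo : ∀ i, i < m → digit b (d * b ^ m + r) i = digit b r i := by
    intro i hi
    unfold digit
    obtain ⟨j, rfl⟩ : ∃ j, m = i + 1 + j := ⟨m - (i + 1), by omega⟩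
    have : d * b ^ (i + 1 + j) + r = r + (b * (d * b ^ j)) * b ^ i := by ring
    rw [this, Nat.add_mul_div_right _ _ (Nat.pow_pos (by omega)), Nat.add_mul_mod_self_left]
  have hhi : ∀ i, m < i → digit b (d * b ^ m + r) i = 0 := by
    intro i hi
    apply digit_zero_of_lt hb (m := m + 1) _ hi
    rw [pow_succ]
    nlinarith
  ext i
  simp only [Finset.mem_filter, Finset.mem_insert, Finset.mem_range]
  constructor
  · rintro ⟨_, h⟩
    rcases lt_trichotomy i m with h1 | h1 | h1
    · right
      rw [hlo i h1] at h
      exact ⟨lt_of_digit_ne hb h, h⟩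
    · exact Or.inl h1
    · exact absurd (hhi i h1) h
  · intro h
    have key : digit b (d * b ^ m + r) i ≠ 0 := by
      rcases h with rfl | ⟨_, h⟩
      · rw [hm]; omega
      · have : i < m := by
          by_contra hc
          exact h (digit_zero_of_lt hb hr (by omega))
        rwa [hlo i this]
    exact ⟨lt_of_digit_ne hb key, key⟩

theorem sort_insert_max (s : Finset ℕ) (m : ℕ) (h : ∀ i ∈ s, i < m) :
    (insert m s).sort (· ≤ ·) = s.sort (· ≤ ·) ++ [m] := by
  apply List.Perm.eq_of_pairwise' (r := (· ≤ ·))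
  · exact Finset.pairwise_sort _ _
  · rw [List.pairwise_append]
    refine ⟨Finset.pairwise_sort _ _, by simp, ?_⟩
    intro a ha c hc
    simp at ha hc
    subst hc
    exact (h a ha).le
  · rw [List.perm_ext_iff_of_nodup (Finset.sort_nodup _ _)]
    · intro a; simp [or_comm]
    · rw [List.nodup_append]
      refine ⟨Finset.sort_nodup _ _, by simp, ?_⟩
      intro a ha c hc
      simp at ha hc
      subst hc
      exact (h a ha).ne

theorem mualpha_step {b d r m : ℕ} (α : ℕ) (hb : 2 ≤ b) (hd : 0 < d) (hdb : d < b)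
    (hr : r < b ^ m) :
    mualpha b (α + 1) (d * b ^ m + r) = (m + 1) + mualpha b α r := by
  unfold mualpha
  rw [filter_step hb hd hdb hr, sort_insert_max]
  · simp
  · intro i hi
    simp only [Finset.mem_filter] at hi
    by_contra hc
    exact hi.2 (digit_zero_of_lt hb hr (by omega))

theorem mualpha_zero_right (b α : ℕ) : mualpha b α 0 = 0 := by
  have : ((Finset.range (0 + 1)).filter fun i => digit b 0 i ≠ 0) = ∅ := by
    ext i; simp [digit]
  unfold mualpha
  rw [this]; simp

theorem mualpha_zero_left (b k : ℕ) : mualpha b 0 k = 0 := by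
  simp [mualpha]

/-- partial sums -/
noncomputable def S (b α m : ℕ) : ℝ := ∑ k ∈ Finset.range (b ^ m), ((b : ℝ) ^ mualpha b α k)⁻¹

theorem S_nonneg (b α m : ℕ) : 0 ≤ S b α m := Finset.sum_nonneg fun _ _ => by positivity

theorem S_zero_right (b α : ℕ) : S b α 0 = 1 := by simp [S, mualpha_zero_right]

theorem S_zero_left (b m : ℕ) : S b 0 m = (b : ℝ) ^ m := by simp [S, mualpha_zero_left]

theorem sum_range_mul (f : ℕ → ℝ) (c n : ℕ) :
    ∑ k ∈ Finset.range (c * n), f k = ∑ d ∈ Finset.range c, ∑ r ∈ Finset.range n, f (d * n + r) := by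
  induction c with
  | zero => simp
  | succ c ih => rw [Nat.succ_mul, Finset.sum_range_add, Finset.sum_range_succ, ih]

theorem S_step (b α m : ℕ) (hb : 2 ≤ b) :
    S b (α + 1) (m + 1) = S b (α + 1) m + ((b : ℝ) - 1) * ((b : ℝ) ^ (m + 1))⁻¹ * S b α m := by
  obtain ⟨c, rfl⟩ : ∃ c, b = c + 1 := ⟨b - 1, by omega⟩
  unfold S
  conv_lhs => rw [pow_succ (c + 1) m, mul_comm ((c + 1) ^ m), sum_range_mul, Finset.sum_range_succ']
  have : ∀ d ∈ Finset.range c, ∑ r ∈ Finset.range ((c + 1) ^ m),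
      (((c + 1 : ℕ) : ℝ) ^ mualpha (c + 1) (α + 1) ((d + 1) * (c + 1) ^ m + r))⁻¹ =
      (((c + 1 : ℕ) : ℝ) ^ (m + 1))⁻¹ *
        ∑ r ∈ Finset.range ((c + 1) ^ m), (((c + 1 : ℕ) : ℝ) ^ mualpha (c + 1) α r)⁻¹ := by
    intro d hd
    rw [Finset.mul_sum]
    refine Finset.sum_congr rfl fun r hr => ?_
    rw [mualpha_step α hb (by omega) (by simp at hd; omega) (by simpa using hr), pow_add, mul_inv]
  rw [Finset.sum_congr rfl this]
  simp
  ring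

/-- generating function lemma -/
theorem gen (a c : ℕ → ℝ) (x C : ℝ) (hx0 : 0 ≤ x) (hx1 : x < 1) (ha : ∀ m, 0 ≤ a m)
    (hc0 : ∀ m, 0 ≤ c m) (h0 : a 0 = 1) (hs : ∀ m, a (m + 1) = a m + c m)
    (hC : HasSum (fun m => c m * x ^ m) C) :
    HasSum (fun m => a m * x ^ m) ((1 + x * C) / (1 - x)) := by
  have hx : 0 < 1 - x := by linarith
  have hnn : ∀ m, 0 ≤ a m * x ^ m := fun m => mul_nonneg (ha m) (pow_nonneg hx0 m)
  have hstep : ∀ m, a (m + 1) * x ^ (m + 1) = x * (a m * x ^ m) + x * (c m * x ^ m) := by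
    intro m; rw [hs]; ring
  have hsum : Summable (fun m => a m * x ^ m) := by
    apply summable_of_sum_range_le (c := (1 + x * C) / (1 - x)) hnn
    intro N
    have h1 : ∑ m ∈ Finset.range (N + 1), a m * x ^ m =
        x * ∑ m ∈ Finset.range N, a m * x ^ m + x * ∑ m ∈ Finset.range N, c m * x ^ m + 1 := by
      rw [Finset.sum_range_succ', Finset.sum_congr rfl fun m _ => hstep m,
        Finset.sum_add_distrib, Finset.mul_sum, Finset.mul_sum, h0]
      simp
    rw [Finset.sum_range_succ] at h1
    have h2 : ∑ m ∈ Finset.range N, c m * x ^ m ≤ C :=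
      sum_le_hasSum _ (fun m _ => mul_nonneg (hc0 m) (pow_nonneg hx0 m)) hC
    rw [le_div_iff₀ hx]
    have := hnn N
    have := mul_le_mul_of_nonneg_left h2 hx0
    nlinarith
  have h3 := hsum.tsum_eq_zero_add
  have h4 : ∑' m, a (m + 1) * x ^ (m + 1) = x * (∑' m, a m * x ^ m) + x * C := by
    rw [tsum_congr hstep, (hsum.mul_left x).tsum_add (hC.summable.mul_left x), tsum_mul_left,
      tsum_mul_left, hC.tsum_eq]
  rw [h4, h0] at h3
  have : (1 + x * C) / (1 - x) = ∑' m, a m * x ^ m := by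
    rw [div_eq_iff hx.ne']; simp at h3; linarith
  rw [this]
  exact hsum.hasSum

/-- the values `(b-1) b^{-j} F_β(b^{-j})`. -/
noncomputable def H (b : ℕ) : ℕ → ℕ → ℝ
  | 0, j => ((b : ℝ) - 1) / ((b : ℝ) ^ j - b)
  | β + 1, j => ((b : ℝ) - 1) / ((b : ℝ) ^ j - 1) * (1 + H b β (j + 1))

theorem hasSum_H (b : ℕ) (hb : 2 ≤ b) (β : ℕ) : ∀ j, 1 ≤ j → 2 ≤ β + j →
    HasSum (fun m => ((b : ℝ) - 1) * ((b : ℝ) ^ j)⁻¹ * (S b β m * (((b : ℝ) ^ j)⁻¹) ^ m))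
      (H b β j) := by
  have hb' : (2 : ℝ) ≤ b := by exact_mod_cast hb
  induction β with
  | zero =>
    intro j _ hj
    obtain ⟨i, rfl⟩ : ∃ i, j = i + 2 := ⟨j - 2, by omega⟩
    have hp : (1 : ℝ) < (b : ℝ) ^ (i + 1) := one_lt_pow₀ (by linarith) (by omega)
    have := (hasSum_geometric_of_lt_one (r := ((b : ℝ) ^ (i + 1))⁻¹) (by positivity)
      (inv_lt_one_of_one_lt₀ hp)).mul_left (((b : ℝ) - 1) * ((b : ℝ) ^ (i + 2))⁻¹)
    refine hasSum_cast this (fun m => ?_) ?_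
    · rw [S_zero_left, ← mul_pow]
      congr 2
      rw [pow_succ _ (i + 1)]
      field_simp
    · simp only [H]
      rw [pow_succ _ (i + 1)]
      have h1 : (b : ℝ) ^ (i + 1) - 1 ≠ 0 := by linarith
      have h2 : (b : ℝ) ^ (i + 1) * b - b ≠ 0 := by
        have : (b : ℝ) ^ (i + 1) * b - b = ((b : ℝ) ^ (i + 1) - 1) * b := by ring
        rw [this]; exact mul_ne_zero h1 (by linarith)
      have h3 : 1 - ((b : ℝ) ^ (i + 1))⁻¹ = ((b : ℝ) ^ (i + 1) - 1) / (b : ℝ) ^ (i + 1) := by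
        field_simp
      rw [h3]
      have h4 : (b : ℝ) ^ (i + 1) * b - b = ((b : ℝ) ^ (i + 1) - 1) * b := by ring
      rw [h4]
      generalize (b : ℝ) ^ (i + 1) - 1 = q at *
      field_simp
  | succ β ih =>
    intro j hj _
    have hp : (1 : ℝ) < (b : ℝ) ^ j := one_lt_pow₀ (by linarith) (by omega)
    have hC := (ih (j + 1) (by omega) (by omega)).mul_left ((b : ℝ) ^ j)
    have := (gen (S b (β + 1)) (fun m => ((b : ℝ) - 1) * ((b : ℝ) ^ (m + 1))⁻¹ * S b β m)
      (((b : ℝ) ^ j)⁻¹) ((b : ℝ) ^ j * H b β (j + 1)) (by positivity) (inv_lt_one_of_one_lt₀ hp)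
      (S_nonneg b _) (fun m => mul_nonneg (mul_nonneg (by linarith) (by positivity))
        (S_nonneg b _ m)) (S_zero_right _ _) (fun m => S_step b β m hb) (by
          refine hasSum_cast hC (fun m => ?_) rfl
          simp only [pow_succ, mul_pow, inv_pow, mul_inv]
          field_simp)).mul_left (((b : ℝ) - 1) * ((b : ℝ) ^ j)⁻¹)
    refine hasSum_cast this (fun m => rfl) ?_
    simp only [H]
    have h1 : (b : ℝ) ^ j - 1 ≠ 0 := by linarith
    have h3 : 1 - ((b : ℝ) ^ j)⁻¹ = ((b : ℝ) ^ j - 1) / (b : ℝ) ^ j := by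
      field_simp
    rw [h3]
    generalize (b : ℝ) ^ j - 1 = q at *
    field_simp

theorem hasSum_main (b α : ℕ) (hb : 2 ≤ b) (hα : 1 ≤ α) :
    HasSum (fun k => ((b : ℝ) ^ mualpha b (α + 1) k)⁻¹) (1 + H b α 1) := by
  have h := hasSum_H b hb α 1 le_rfl (by omega)
  have hS : ∀ N, S b (α + 1) N = 1 + ∑ m ∈ Finset.range N,
      ((b : ℝ) - 1) * ((b : ℝ) ^ 1)⁻¹ * (S b α m * (((b : ℝ) ^ 1)⁻¹) ^ m) := by
    intro N
    induction N with
    | zero => simp [S_zero_right]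
    | succ N ih =>
      rw [S_step b α N hb, Finset.sum_range_succ, ih, pow_succ (b : ℝ) N, mul_inv]
      simp only [pow_one, inv_pow]
      ring
  have ht : Filter.Tendsto (S b (α + 1)) Filter.atTop (nhds (1 + H b α 1)) := by
    rw [show S b (α + 1) = _ from funext hS]
    exact h.tendsto_sum_nat.const_add 1
  have hnn : ∀ k, 0 ≤ ((b : ℝ) ^ mualpha b (α + 1) k)⁻¹ := fun k => by positivity
  have hpow : Filter.Tendsto (fun m => b ^ m) Filter.atTop Filter.atTop :=
    tendsto_pow_atTop_atTop_of_one_lt (by omega)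
  have hmono : Monotone (S b (α + 1)) := by
    intro x y hxy
    exact Finset.sum_le_sum_of_subset_of_nonneg
      (Finset.range_mono (Nat.pow_le_pow_right (by omega) hxy)) fun k _ _ => hnn k
  have hsum : Summable (fun k => ((b : ℝ) ^ mualpha b (α + 1) k)⁻¹) := by
    apply summable_of_sum_range_le (c := 1 + H b α 1) hnn
    intro n
    refine le_trans ?_ (hmono.ge_of_tendsto ht n)
    exact Finset.sum_le_sum_of_subset_of_nonneg
      (Finset.range_mono (Nat.lt_pow_self (by omega)).le) fun k _ _ => hnn k
  have := tendsto_nhds_unique ht (hsum.hasSum.tendsto_sum_nat.comp hpow)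
  rw [this]
  exact hsum.hasSum

theorem H_unroll (b n : ℕ) : ∀ β, H b (n + β) 1 =
    ∑ v ∈ Finset.Icc 1 n, ∏ i ∈ Finset.Icc 1 v, ((b : ℝ) - 1) / ((b : ℝ) ^ i - 1) +
      (∏ i ∈ Finset.Icc 1 n, ((b : ℝ) - 1) / ((b : ℝ) ^ i - 1)) * H b β (n + 1) := by
  induction n with
  | zero => intro β; simp
  | succ n ih =>
    intro β
    rw [show n + 1 + β = n + (β + 1) by ring, ih, Finset.sum_Icc_succ_top (by omega),
      Finset.prod_Icc_succ_top (by omega)]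
    simp only [H]
    ring

theorem real_part (b α : ℕ) (hb : 2 ≤ b) (hα : 2 ≤ α) :
    ∑' k : ℕ, ((b : ℝ) ^ mualpha b α (k + 1))⁻¹ =
      ∑ v ∈ Finset.Icc 1 (α - 1), ∏ i ∈ Finset.Icc 1 v,
          ((b : ℝ) - 1) / ((b : ℝ) ^ i - 1) +
        (((b : ℝ) ^ α - 1) / ((b : ℝ) ^ α - b)) *
          ∏ i ∈ Finset.Icc 1 α, ((b : ℝ) - 1) / ((b : ℝ) ^ i - 1) := by
  have hb' : (2 : ℝ) ≤ b := by exact_mod_cast hb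
  obtain ⟨n, rfl⟩ : ∃ n, α = n + 1 := ⟨α - 1, by omega⟩
  have h := hasSum_main b n hb (by omega)
  have h1 := h.summable.tsum_eq_zero_add
  rw [h.tsum_eq, mualpha_zero_right] at h1
  have h2 := H_unroll b n 0
  have hp : (1 : ℝ) < (b : ℝ) ^ (n + 1) := one_lt_pow₀ (by linarith) (by omega)
  have hq : (b : ℝ) ^ (n + 1) - 1 ≠ 0 := by linarith
  have h3 : ((b : ℝ) ^ (n + 1) - 1) / ((b : ℝ) ^ (n + 1) - b) *
      (((b : ℝ) - 1) / ((b : ℝ) ^ (n + 1) - 1)) = H b 0 (n + 1) := by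
    simp only [H]
    generalize (b : ℝ) ^ (n + 1) - b = p
    rw [div_mul_div_comm, mul_comm p, mul_div_mul_left _ _ hq]
  rw [Finset.prod_Icc_succ_top (by omega), mul_left_comm, h3, Nat.add_sub_cancel, ← h2]
  simp at h1 ⊢
  linarith

/-- `Σ_{k ≥ 1} b^{-μ_α(k)}` in closed form; in particular this is the value of
`χ_b(Φ_b(z))` for `z` all of whose digits vanish. -/
theorem sum_pow_neg_mualpha (b α : ℕ) (hb : 2 ≤ b) (hα : 2 ≤ α) :
    (∑' k : ℕ, ((b : ℝ) ^ mualpha b α (k + 1))⁻¹ =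
      ∑ v ∈ Finset.Icc 1 (α - 1), ∏ i ∈ Finset.Icc 1 v,
          ((b : ℝ) - 1) / ((b : ℝ) ^ i - 1) +
        (((b : ℝ) ^ α - 1) / ((b : ℝ) ^ α - b)) *
          ∏ i ∈ Finset.Icc 1 α, ((b : ℝ) - 1) / ((b : ℝ) ^ i - 1)) ∧
    ∀ z : ℕ → ZMod b, (∀ i, z i = 0) →
      chi b α (tent b z) =
        ((∑ v ∈ Finset.Icc 1 (α - 1), ∏ i ∈ Finset.Icc 1 v,
            ((b : ℝ) - 1) / ((b : ℝ) ^ i - 1) +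
          (((b : ℝ) ^ α - 1) / ((b : ℝ) ^ α - b)) *
            ∏ i ∈ Finset.Icc 1 α, ((b : ℝ) - 1) / ((b : ℝ) ^ i - 1) : ℝ) : ℂ) := by
  refine ⟨real_part b α hb hα, ?_⟩
  intro z hz
  rw [← real_part b α hb hα, Complex.ofReal_tsum]
  unfold chi
  refine tsum_congr fun k => ?_
  have : W b (k + 1) (tent b z) = 1 := by
    simp [W, tent, hz]
  rw [this]
  push_cast
  simp

end QMC
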